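/- arXiv:1811.05812 — 11 statements merged into one kernel-verified Lean document; each statement's English description precedes it below -/
import Mathlib

section
/- Let E be a real vector space, let A, B ⊆ E be arbitrary sets, and let l : E → ℝ be a linear functional. Then the set of maximizers of l on the Minkowski sum A + B equals the Minkowski sum of the sets of maximizers of l on A and on B: {x ∈ A + B | ∀ y ∈ A + B, l y ≤ l x} = {x ∈ A | ∀ y ∈ A, l y ≤ l x} + {x ∈ B | ∀ y ∈ B, l y ≤ l x}. -/
open Pointwise

theorem maximizers_minkowski_sum {E : Type*} [AddCommGroup E] [Module ℝ E]
    (A B : Set E) (l : E →ₗ[ℝ] ℝ) :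
    {x ∈ A + B | ∀ y ∈ A + B, l y ≤ l x} =
      {x ∈ A | ∀ y ∈ A, l y ≤ l x} + {x ∈ B | ∀ y ∈ B, l y ≤ l x} := by
  ext x
  constructor
  · rintro ⟨⟨a, ha, b, hb, rfl⟩, h⟩
    refine ⟨a, ⟨ha, fun y hy => ?_⟩, b, ⟨hb, fun y hy => ?_⟩, rfl⟩
    · have h1 := h (y + b) (Set.add_mem_add hy hb)
      simp only [map_add] at h1
      linarith
    · have h1 := h (a + y) (Set.add_mem_add ha hy)
      simp only [map_add] at h1
      linarith
  · rintro ⟨a, ⟨ha, ha2⟩, b, ⟨hb, hb2⟩, rfl⟩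
    refine ⟨Set.add_mem_add ha hb, ?_⟩
    rintro _ ⟨c, hc, d, hd, rfl⟩
    have h1 := ha2 c hc
    have h2 := hb2 d hd
    simp only [map_add]
    linarith
end

section
/- Let E be a real normed vector space and A, B ⊆ E arbitrary sets. Every nonempty exposed face C of the Minkowski sum A + B decomposes as a Minkowski sum of exposed faces of the summands: there exist sets F and G such that F is a nonempty exposed face of A, G is a nonempty exposed face of B, and C = F + G. -/
open Pointwise

theorem exposedFace_minkowski_sum_decomposition {E : Type*} [NormedAddCommGroup E]
    [NormedSpace ℝ E] (A B C : Set E) (hC : IsExposed ℝ (A + B) C) (hCne : C.Nonempty) :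
    ∃ F G : Set E, F.Nonempty ∧ IsExposed ℝ A F ∧ G.Nonempty ∧ IsExposed ℝ B G ∧
      C = F + G := by
  obtain ⟨l, hl⟩ := hC hCne
  -- a maximizer of `l` on the sum splits into maximizers on the summands
  have key : ∀ a ∈ A, ∀ b ∈ B, (∀ y ∈ A + B, l y ≤ l (a + b)) →
      (∀ y ∈ A, l y ≤ l a) ∧ (∀ y ∈ B, l y ≤ l b) := by
    intro a ha b hb h
    refine ⟨fun y hy => ?_, fun y hy => ?_⟩
    · have := h (y + b) (Set.add_mem_add hy hb)
      simpa [map_add] using this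
    · have := h (a + y) (Set.add_mem_add ha hy)
      simpa [map_add] using this
  refine ⟨{x ∈ A | ∀ y ∈ A, l y ≤ l x}, {x ∈ B | ∀ y ∈ B, l y ≤ l x}, ?_,
    fun _ => ⟨l, rfl⟩, ?_, fun _ => ⟨l, rfl⟩, ?_⟩
  · obtain ⟨c, hc⟩ := hCne
    rw [hl] at hc
    obtain ⟨⟨a, ha, b, hb, rfl⟩, h⟩ := hc
    exact ⟨a, ha, (key a ha b hb h).1⟩
  · obtain ⟨c, hc⟩ := hCne
    rw [hl] at hc
    obtain ⟨⟨a, ha, b, hb, rfl⟩, h⟩ := hc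
    exact ⟨b, hb, (key a ha b hb h).2⟩
  · rw [hl]
    ext c
    constructor
    · rintro ⟨⟨a, ha, b, hb, rfl⟩, h⟩
      exact Set.add_mem_add ⟨ha, (key a ha b hb h).1⟩ ⟨hb, (key a ha b hb h).2⟩
    · rintro ⟨a, ⟨ha, ha'⟩, b, ⟨hb, hb'⟩, rfl⟩
      refine ⟨Set.add_mem_add ha hb, ?_⟩
      rintro _ ⟨x, hx, y, hy, rfl⟩
      simp only [map_add]
      exact add_le_add (ha' x hx) (hb' y hy)
end

section
/- Let E be a real vector space, A, B ⊆ E arbitrary sets, and u, v : E → ℝ linear functionals. Writing S^l := {x ∈ S | ∀ y ∈ S, l y ≤ l x}, iterated faces of a Minkowski sum decompose: ((A + B)^u)^v = (A^u)^v + (B^u)^v. -/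
open Pointwise

/-- The set of points of `S` maximizing the linear functional `l`
(the face of `S` in direction `l`). -/
def dirFace {E : Type*} [AddCommGroup E] [Module ℝ E] (S : Set E) (l : E →ₗ[ℝ] ℝ) :
    Set E :=
  {x ∈ S | ∀ y ∈ S, l y ≤ l x}

theorem dirFace_add_aux {E : Type*} [AddCommGroup E] [Module ℝ E]
    (A B : Set E) (l : E →ₗ[ℝ] ℝ) :
    dirFace (A + B) l = dirFace A l + dirFace B l := by
  ext x
  constructor
  · rintro ⟨⟨a, ha, b, hb, rfl⟩, h⟩
    refine ⟨a, ⟨ha, fun y hy => ?_⟩, b, ⟨hb, fun y hy => ?_⟩, rfl⟩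
    · have := h _ (Set.add_mem_add hy hb)
      simp only [map_add] at this
      linarith
    · have := h _ (Set.add_mem_add ha hy)
      simp only [map_add] at this
      linarith
  · rintro ⟨a, ⟨ha, ha'⟩, b, ⟨hb, hb'⟩, rfl⟩
    refine ⟨Set.add_mem_add ha hb, ?_⟩
    rintro _ ⟨c, hc, d, hd, rfl⟩
    simp only [map_add]
    exact add_le_add (ha' c hc) (hb' d hd)

theorem iterated_faces_minkowski_sum {E : Type*} [AddCommGroup E] [Module ℝ E]
    (A B : Set E) (u v : E →ₗ[ℝ] ℝ) :
    dirFace (dirFace (A + B) u) v = dirFace (dirFace A u) v + dirFace (dirFace B u) v := by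
  rw [dirFace_add_aux, dirFace_add_aux]
end

section
/- Let E = EuclideanSpace ℝ (Fin d), let s, t ⊆ E be finite sets, and let P = convexHull ℝ s and Q = convexHull ℝ t. Assume the non-degeneracy condition: for every nonempty exposed face F₁ of P and every nonempty exposed face G₁ of Q, finrank(vectorSpan ℝ (F₁ + G₁)) = finrank(vectorSpan ℝ F₁) + finrank(vectorSpan ℝ G₁). Let F and F' be nonempty exposed faces of P with F' ⊆ F, let G be a nonempty exposed face of Q, and suppose F + G is an exposed face of P + Q. Then F' + G is an exposed face of P + Q, and F' + G ⊆ F + G. -/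
open Pointwise

theorem aux_trans {E : Type*} [NormedAddCommGroup E] [NormedSpace ℝ E] {u B C : Set E}
    (hu : u.Finite) (hB : IsExposed ℝ (convexHull ℝ u) B) (hC : IsExposed ℝ B C) :
    IsExposed ℝ (convexHull ℝ u) C := by
  intro hne
  have hCB := hC.subset
  have hBA := hB.subset
  obtain ⟨m, hm⟩ := hC hne
  obtain ⟨c, hc⟩ := hne
  obtain ⟨l, hl⟩ := hB ⟨c, hCB hc⟩
  have hcB : ∀ y ∈ convexHull ℝ u, l y ≤ l c := by
    have := hCB hc
    rw [hl] at this
    exact this.2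
  have hcC : ∀ y ∈ B, m y ≤ m c := by
    have := hc
    rw [hm] at this
    exact this.2
  have key : ∀ᶠ N : ℝ in Filter.atTop, ∀ v ∈ u, N * l v + m v ≤ N * l c + m c := by
    rw [Filter.eventually_all_finite hu]
    intro v hv
    have hvA := subset_convexHull ℝ u hv
    rcases (hcB v hvA).lt_or_eq with h | h
    · filter_upwards [Filter.eventually_ge_atTop ((m v - m c) / (l c - l v))] with N hN
      rw [div_le_iff₀ (by linarith)] at hN
      linarith
    · have : v ∈ B := by
        rw [hl]
        exact ⟨hvA, fun y hy => h ▸ hcB y hy⟩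
      have := hcC v this
      filter_upwards with N
      rw [h]
      linarith
  obtain ⟨N, hN⟩ := key.exists
  have hA : ∀ x ∈ convexHull ℝ u, N * l x + m x ≤ N * l c + m c := by
    have hsub : convexHull ℝ u ⊆ {x | (N • l + m) x ≤ N * l c + m c} := by
      apply convexHull_min
      · intro v hv
        simpa using hN v hv
      · exact convex_halfSpace_le (N • l + m).toLinearMap.isLinear _
    intro x hx
    simpa using hsub hx
  refine ⟨(N + 1) • l + m, ?_⟩
  ext x
  constructor
  · intro hx
    refine ⟨hBA (hCB hx), fun y hy => ?_⟩
    have h1 := hA y hy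
    have h2 := hcB y hy
    have h3 : l c ≤ l x := by
      have := hCB hx
      rw [hl] at this
      exact this.2 c (hBA (hCB hc))
    have h4 : m c ≤ m x := by
      rw [hm] at hx
      exact hx.2 c (hCB hc)
    have h5 := hcB x (hBA (hCB hx))
    have h6 : l x = l c := le_antisymm h5 h3
    simp only [add_apply, smul_apply, smul_eq_mul, h6]
    linarith
  · rintro ⟨hx, hmax⟩
    have h0 := hmax c (hBA (hCB hc))
    simp only [add_apply, smul_apply, smul_eq_mul] at h0
    have h1 := hA x hx
    have h2 := hcB x hx
    have h3 : l x = l c := by linarith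
    have h4 : m c ≤ m x := by rw [h3] at h0; linarith
    have hxB : x ∈ B := by
      rw [hl]
      exact ⟨hx, fun y hy => h3 ▸ hcB y hy⟩
    rw [hm]
    exact ⟨hxB, fun y hy => (hcC y hy).trans h4⟩

theorem aux_disj {E : Type*} [NormedAddCommGroup E] [NormedSpace ℝ E] [FiniteDimensional ℝ E]
    {A B : Set E}
    (h : Module.finrank ℝ (vectorSpan ℝ (A + B)) =
        Module.finrank ℝ (vectorSpan ℝ A) + Module.finrank ℝ (vectorSpan ℝ B)) :
    Disjoint (vectorSpan ℝ A) (vectorSpan ℝ B) := by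
  have hle : vectorSpan ℝ (A + B) ≤ vectorSpan ℝ A ⊔ vectorSpan ℝ B := by
    rw [vectorSpan_def, Submodule.span_le]
    rintro _ ⟨_, ⟨a, ha, b, hb, rfl⟩, _, ⟨a', ha', b', hb', rfl⟩, rfl⟩
    have : (a + b) -ᵥ (a' + b') = (a -ᵥ a') + (b -ᵥ b') := by
      simp only [vsub_eq_sub]; abel
    simp only [this]
    exact Submodule.add_mem_sup (vsub_mem_vectorSpan ℝ ha ha') (vsub_mem_vectorSpan ℝ hb hb')
  have h1 := Submodule.finrank_mono hle
  have h2 := Submodule.finrank_sup_add_finrank_inf_eq (vectorSpan ℝ A) (vectorSpan ℝ B)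
  rw [disjoint_iff, ← Submodule.finrank_eq_zero (R := ℝ)]
  omega

theorem aux_fun {E : Type*} [NormedAddCommGroup E] [NormedSpace ℝ E] [FiniteDimensional ℝ E]
    {V W : Submodule ℝ E} (h : Disjoint V W) (m : E →L[ℝ] ℝ) :
    ∃ n : E →L[ℝ] ℝ, (∀ v ∈ V, n v = m v) ∧ ∀ w ∈ W, n w = 0 := by
  obtain ⟨W', hW, hc⟩ := h.symm.exists_isCompl
  refine ⟨LinearMap.toContinuousLinearMap
    (m.toLinearMap ∘ₗ V.projection W' hc.symm), ?_, ?_⟩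
  · intro v hv
    have := Submodule.projection_apply_left hc.symm ⟨v, hv⟩
    simp only [] at this
    simp [this]
  · intro w hw
    have := (Submodule.projection_apply_eq_zero_iff hc.symm).2 (hW hw)
    simp [this]

theorem subface_minkowski_sum_left {d : ℕ} (s t : Set (EuclideanSpace ℝ (Fin d)))
    (hs : s.Finite) (ht : t.Finite)
    (P Q : Set (EuclideanSpace ℝ (Fin d)))
    (hP : P = convexHull ℝ s) (hQ : Q = convexHull ℝ t)
    (hnd : ∀ F₁ G₁ : Set (EuclideanSpace ℝ (Fin d)),
      F₁.Nonempty → IsExposed ℝ P F₁ → G₁.Nonempty → IsExposed ℝ Q G₁ →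
      Module.finrank ℝ (vectorSpan ℝ (F₁ + G₁)) =
        Module.finrank ℝ (vectorSpan ℝ F₁) + Module.finrank ℝ (vectorSpan ℝ G₁))
    (F F' G : Set (EuclideanSpace ℝ (Fin d)))
    (hF : IsExposed ℝ P F) (hFne : F.Nonempty)
    (hF' : IsExposed ℝ P F') (hF'ne : F'.Nonempty) (hF'F : F' ⊆ F)
    (hG : IsExposed ℝ Q G) (hGne : G.Nonempty)
    (hFG : IsExposed ℝ (P + Q) (F + G)) :
    IsExposed ℝ (P + Q) (F' + G) ∧ F' + G ⊆ F + G := by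
  refine ⟨?_, Set.add_subset_add_right hF'F⟩
  have hPQ : P + Q = convexHull ℝ (s + t) := by rw [hP, hQ, convexHull_add]
  have hdis := aux_disj (hnd F G hFne hF hGne hG)
  rw [hPQ] at hFG ⊢
  refine aux_trans (hs.add ht) hFG ?_
  intro _
  obtain ⟨m, hm⟩ := (hF'.mono hF.subset hF'F) hF'ne
  obtain ⟨n, hnF, hnG⟩ := aux_fun hdis m
  obtain ⟨f0, hf0⟩ := hF'ne
  obtain ⟨g0, hg0⟩ := hGne
  have hval : ∀ f ∈ F, ∀ g ∈ G, n (f + g) = m f - m f0 + n (f0 + g0) := by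
    intro f hf g hg
    have h1 := hnF _ (vsub_mem_vectorSpan ℝ hf (hF'F hf0))
    have h2 := hnG _ (vsub_mem_vectorSpan ℝ hg hg0)
    simp only [vsub_eq_sub, map_sub] at h1 h2
    simp only [map_add]
    linarith
  refine ⟨n, ?_⟩
  ext z
  constructor
  · rintro ⟨f, hf, g, hg, rfl⟩
    refine ⟨⟨f, hF'F hf, g, hg, rfl⟩, ?_⟩
    rintro _ ⟨f1, hf1, g1, hg1, rfl⟩
    simp only [hval f1 hf1 g1 hg1, hval f (hF'F hf) g hg]
    rw [hm] at hf
    linarith [hf.2 f1 hf1]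
  · rintro ⟨⟨f, hf, g, hg, rfl⟩, hmax⟩
    refine ⟨f, ?_, g, hg, rfl⟩
    rw [hm]
    refine ⟨hf, fun y hy => ?_⟩
    have := hmax (y + g) ⟨y, hy, g, hg, rfl⟩
    simp only [hval y hy g hg, hval f hf g hg] at this
    linarith
end

section
/- Let E = EuclideanSpace ℝ (Fin d), let s, t ⊆ E be finite sets, and let P = convexHull ℝ s and Q = convexHull ℝ t. Assume the non-degeneracy condition: for every nonempty exposed face F₁ of P and every nonempty exposed face G₁ of Q, finrank(vectorSpan ℝ (F₁ + G₁)) = finrank(vectorSpan ℝ F₁) + finrank(vectorSpan ℝ G₁). Let F be a nonempty exposed face of P, let G and G' be nonempty exposed faces of Q with G' ⊆ G, and suppose F + G is an exposed face of P + Q. Then F + G' is an exposed face of P + Q, and F + G' ⊆ F + G. -/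
open Pointwise

/-- Transitivity of exposed faces for polytopes. -/
theorem exposed_trans_polytope {E : Type*} [AddCommGroup E] [Module ℝ E] [TopologicalSpace E]
    [IsTopologicalAddGroup E] [ContinuousSMul ℝ E]
    (s : Set E) (hs : s.Finite) (A B : Set E) (l m : StrongDual ℝ E)
    (hA : A = {x ∈ convexHull ℝ s | ∀ y ∈ convexHull ℝ s, l y ≤ l x})
    (hB : B = {x ∈ A | ∀ y ∈ A, m y ≤ m x}) : IsExposed ℝ (convexHull ℝ s) B := by
  rintro ⟨b, hb⟩
  have hb' := hb
  rw [hB] at hb'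
  obtain ⟨hbA, hbm⟩ := hb'
  have hbA' := hbA
  rw [hA] at hbA'
  obtain ⟨hbs, hbl⟩ := hbA'
  have hev : ∀ᶠ N : ℝ in Filter.atTop, ∀ v ∈ s, N * l v + m v ≤ N * l b + m b := by
    rw [Filter.eventually_all_finite hs]
    intro v hv
    have hvs := subset_convexHull ℝ s hv
    rcases (hbl v hvs).lt_or_eq with h | h
    · filter_upwards [Filter.eventually_ge_atTop ((m v - m b) / (l b - l v))] with N hN
      rw [div_le_iff₀ (by linarith)] at hN
      linarith
    · have : m v ≤ m b := hbm v (by rw [hA]; exact ⟨hvs, fun y hy => h ▸ hbl y hy⟩)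
      filter_upwards with N
      rw [h]; linarith
  obtain ⟨N, hN⟩ := hev.exists
  have hN' : ∀ x ∈ convexHull ℝ s, N * l x + m x ≤ N * l b + m b := by
    have hc : Convex ℝ {x | (N • l + m) x ≤ N * l b + m b} :=
      convex_halfSpace_le (N • l + m).toLinearMap.isLinear _
    intro x hx
    have := convexHull_min (t := {x | (N • l + m) x ≤ N * l b + m b})
      (fun v hv => by simpa using hN v hv) hc hx
    simpa using this
  refine ⟨(N + 1) • l + m, ?_⟩
  ext x
  simp only [Set.mem_ofPred_eq, add_apply, smul_apply, smul_eq_mul]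
  constructor
  · intro hx
    rw [hB] at hx
    obtain ⟨hxA, hxm⟩ := hx
    have hxA' := hxA
    rw [hA] at hxA'
    refine ⟨hxA'.1, fun y hy => ?_⟩
    have h1 := hN' y hy
    have h2 := hxA'.2 y hy
    have h3 := hxm b hbA
    have h4 := hxA'.2 b hbs
    have h5 := hbl x hxA'.1
    have h6 : l x = l b := le_antisymm h5 h4
    rw [h6] at h2 ⊢
    linarith
  · rintro ⟨hx, hxm⟩
    have h1 := hN' x hx
    have h2 := hxm b hbs
    have h3 := hbl x hx
    have h4 : l x = l b := le_antisymm h3 (by linarith)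
    rw [h4] at h2
    have hxA : x ∈ A := by rw [hA]; exact ⟨hx, fun y hy => h4 ▸ hbl y hy⟩
    rw [hB]
    exact ⟨hxA, fun y hy => (hbm y hy).trans (by linarith)⟩

theorem vectorSpan_disjoint_of_finrank {E : Type*} [AddCommGroup E] [Module ℝ E]
    [FiniteDimensional ℝ E] (F G : Set E)
    (h : Module.finrank ℝ (vectorSpan ℝ (F + G)) =
      Module.finrank ℝ (vectorSpan ℝ F) + Module.finrank ℝ (vectorSpan ℝ G)) :
    Disjoint (vectorSpan ℝ F) (vectorSpan ℝ G) := by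
  have hle : vectorSpan ℝ (F + G) ≤ vectorSpan ℝ F ⊔ vectorSpan ℝ G := by
    refine Submodule.span_le.2 ?_
    rintro _ ⟨_, ⟨a, ha, b, hb, rfl⟩, _, ⟨c, hc, e, he, rfl⟩, rfl⟩
    have : (a + b) -ᵥ (c + e) = (a -ᵥ c) + (b -ᵥ e) := by simp only [vsub_eq_sub]; abel
    simp only [this]
    exact Submodule.add_mem_sup (vsub_mem_vectorSpan ℝ ha hc) (vsub_mem_vectorSpan ℝ hb he)
  have h1 := Submodule.finrank_mono hle
  have h2 := Submodule.finrank_sup_add_finrank_inf_eq (vectorSpan ℝ F) (vectorSpan ℝ G)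
  rw [disjoint_iff]
  exact Submodule.finrank_eq_zero.1 (by omega)

theorem exists_functional_of_disjoint {E : Type*} [AddCommGroup E] [Module ℝ E]
    [TopologicalSpace E] [IsTopologicalAddGroup E] [ContinuousSMul ℝ E] [T2Space E]
    [FiniteDimensional ℝ E] (V W : Submodule ℝ E) (h : Disjoint V W) (m : StrongDual ℝ E) :
    ∃ m' : StrongDual ℝ E, (∀ v ∈ V, m' v = 0) ∧ ∀ w ∈ W, m' w = m w := by
  obtain ⟨W', hW, hc⟩ := h.exists_isCompl
  refine ⟨LinearMap.toContinuousLinearMap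
    (LinearMap.ofIsCompl hc 0 (m.toLinearMap.domRestrict _)), ?_, ?_⟩
  · intro v hv
    exact LinearMap.ofIsCompl_left_apply hc ⟨v, hW hv⟩
  · intro w hw
    exact LinearMap.ofIsCompl_right_apply hc ⟨w, hw⟩

theorem subface_minkowski_sum_right {d : ℕ} (s t : Set (EuclideanSpace ℝ (Fin d)))
    (hs : s.Finite) (ht : t.Finite)
    (P Q : Set (EuclideanSpace ℝ (Fin d)))
    (hP : P = convexHull ℝ s) (hQ : Q = convexHull ℝ t)
    (hnd : ∀ F₁ G₁ : Set (EuclideanSpace ℝ (Fin d)),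
      F₁.Nonempty → IsExposed ℝ P F₁ → G₁.Nonempty → IsExposed ℝ Q G₁ →
      Module.finrank ℝ (vectorSpan ℝ (F₁ + G₁)) =
        Module.finrank ℝ (vectorSpan ℝ F₁) + Module.finrank ℝ (vectorSpan ℝ G₁))
    (F G G' : Set (EuclideanSpace ℝ (Fin d)))
    (hF : IsExposed ℝ P F) (hFne : F.Nonempty)
    (hG : IsExposed ℝ Q G) (hGne : G.Nonempty)
    (hG' : IsExposed ℝ Q G') (hG'ne : G'.Nonempty) (hG'G : G' ⊆ G)
    (hFG : IsExposed ℝ (P + Q) (F + G)) :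
    IsExposed ℝ (P + Q) (F + G') ∧ F + G' ⊆ F + G := by
  refine ⟨?_, Set.add_subset_add_left hG'G⟩
  have hPQ : P + Q = convexHull ℝ (s + t) := by rw [hP, hQ, convexHull_add]
  have hFP := hF.subset
  have hGQ := hG.subset
  obtain ⟨f₀, hf₀⟩ := hFne
  obtain ⟨g₀, hg₀⟩ := hGne
  obtain ⟨l, hl⟩ := hFG ⟨f₀ + g₀, Set.add_mem_add hf₀ hg₀⟩
  obtain ⟨m, hm⟩ := hG' hG'ne
  have hdis : Disjoint (vectorSpan ℝ F) (vectorSpan ℝ G) :=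
    vectorSpan_disjoint_of_finrank F G (hnd F G ⟨f₀, hf₀⟩ hF ⟨g₀, hg₀⟩ hG)
  obtain ⟨m', hm'V, hm'W⟩ := exists_functional_of_disjoint _ _ hdis m
  have hFc : ∀ f ∈ F, m' f = m' f₀ := by
    intro f hf
    have := hm'V _ (vsub_mem_vectorSpan ℝ hf hf₀)
    rw [vsub_eq_sub, map_sub] at this
    linarith
  have hGc : ∀ g ∈ G, m' g - m' g₀ = m g - m g₀ := by
    intro g hg
    have := hm'W _ (vsub_mem_vectorSpan ℝ hg hg₀)
    rwa [vsub_eq_sub, map_sub, map_sub] at this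
  rw [hPQ] at hl ⊢
  refine exposed_trans_polytope (s + t) (hs.add ht) (F + G) (F + G') l m' hl ?_
  obtain ⟨g₁, hg₁⟩ := hG'ne
  ext x
  constructor
  · rintro ⟨f, hf, g, hg, rfl⟩
    refine ⟨Set.add_mem_add hf (hG'G hg), ?_⟩
    rintro _ ⟨f', hf', g', hg', rfl⟩
    have hgm := hg
    rw [hm] at hgm
    have h1 := hgm.2 g' (hGQ hg')
    have h2 := hGc g (hG'G hg)
    have h3 := hGc g' hg'
    have h4 := hFc f hf
    have h5 := hFc f' hf'
    simp only [map_add]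
    linarith
  · rintro ⟨⟨f, hf, g, hg, rfl⟩, hx⟩
    refine Set.add_mem_add hf ?_
    have h1 := hx (f + g₁) (Set.add_mem_add hf (hG'G hg₁))
    simp only [map_add] at h1
    have h2 := hGc g hg
    have h3 := hGc g₁ (hG'G hg₁)
    rw [hm] at hg₁ ⊢
    exact ⟨hGQ hg, fun y hy => (hg₁.2 y hy).trans (by linarith)⟩
end

section
/- Let E = EuclideanSpace ℝ (Fin d), let s, t ⊆ E be finite sets, and let P = convexHull ℝ s and Q = convexHull ℝ t. Assume the non-degeneracy condition: for every nonempty exposed face F₁ of P and every nonempty exposed face G₁ of Q, finrank(vectorSpan ℝ (F₁ + G₁)) = finrank(vectorSpan ℝ F₁) + finrank(vectorSpan ℝ G₁). Let F be a nonempty exposed face of P and G a nonempty exposed face of Q such that F + G is an exposed face of P + Q with k := finrank(vectorSpan ℝ (F + G)) satisfying k + 1 < finrank(vectorSpan ℝ (P + Q)). Then either there exists an exposed face F' of P with F ⊆ F' such that F' + G is an exposed face of P + Q containing F + G with finrank(vectorSpan ℝ (F' + G)) = k + 1, or there exists an exposed face G' of Q with G ⊆ G' such that F + G' is an exposed face of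 P + Q containing F + G with finrank(vectorSpan ℝ (F + G')) = k + 1. -/
open Pointwise

/-- A proper nonempty exposed face of a polytope has an exposed superface of dimension one more. -/
theorem exists_immediate_superface {d : ℕ} (V A : Set (EuclideanSpace ℝ (Fin d)))
    (hV : V.Finite) (hA : IsExposed ℝ (convexHull ℝ V) A) (hne : A.Nonempty)
    (hlt : Module.finrank ℝ (vectorSpan ℝ A) < Module.finrank ℝ (vectorSpan ℝ (convexHull ℝ V))) :
    ∃ m : StrongDual ℝ (EuclideanSpace ℝ (Fin d)), A ⊆ m.toExposed (convexHull ℝ V) ∧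
      Module.finrank ℝ (vectorSpan ℝ (m.toExposed (convexHull ℝ V))) =
        Module.finrank ℝ (vectorSpan ℝ A) + 1 := by
  obtain ⟨l, hl⟩ := hA hne
  obtain ⟨a, ha⟩ := hne
  have haR : a ∈ convexHull ℝ V ∧ ∀ y ∈ convexHull ℝ V, l y ≤ l a := by
    rw [hl] at ha; exact ha
  have hmemA : ∀ x ∈ convexHull ℝ V, l a ≤ l x → x ∈ A := by
    intro x hx h
    rw [hl]
    exact ⟨hx, fun y hy => (haR.2 y hy).trans h⟩
  set L := vectorSpan ℝ A with hL
  have hAL : ∀ x ∈ A, x - a ∈ L := fun x hx => vsub_mem_vectorSpan ℝ hx ha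
  have hlA : ∀ x ∈ A, l x = l a := by
    intro x hx
    have hx' := hx
    rw [hl] at hx'
    exact le_antisymm (haR.2 x hx'.1) (hx'.2 a haR.1)
  have hTne : {v ∈ V | l v < l a}.Nonempty := by
    by_contra hcon
    rw [Set.not_nonempty_iff_eq_empty] at hcon
    have h1 : convexHull ℝ V ⊆ {x | l a ≤ l x} := by
      apply convexHull_min
      · intro v hv
        by_contra h
        have : v ∈ {v ∈ V | l v < l a} := ⟨hv, not_le.mp h⟩
        rw [hcon] at this
        exact this
      · exact convex_halfSpace_ge l.toLinearMap.isLinear (l a)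
    have h2 : convexHull ℝ V ⊆ A := fun x hx => hmemA x hx (h1 hx)
    have h3 := Submodule.finrank_mono (vectorSpan_mono ℝ h2)
    exact absurd hlt (not_lt.mpr h3)
  set p : EuclideanSpace ℝ (Fin d) → EuclideanSpace ℝ (Fin d) :=
    fun x => (x - a) - L.starProjection (x - a) with hp
  set u : EuclideanSpace ℝ (Fin d) → EuclideanSpace ℝ (Fin d) :=
    fun x => (l a - l x)⁻¹ • p x with hu
  have hpo : ∀ x, p x ∈ Lᗮ := fun x => Submodule.sub_starProjection_mem_orthogonal _
  have huo : ∀ x, u x ∈ Lᗮ := fun x => Submodule.smul_mem _ _ (hpo x)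
  obtain ⟨v0, hv0, hmax⟩ := Set.exists_max_image {v ∈ V | l v < l a} (fun v => ‖u v‖)
    (hV.subset (fun v hv => hv.1)) hTne
  set w := u v0 with hw
  have hwL : ∀ y ∈ L, inner ℝ w y = 0 := fun y hy =>
    Submodule.inner_left_of_mem_orthogonal hy (huo v0)
  set M := L ⊔ Submodule.span ℝ {w} with hM
  let m : StrongDual ℝ (EuclideanSpace ℝ (Fin d)) := (‖w‖ ^ 2) • l + innerSL ℝ w
  have hm : ∀ x, m x = ‖w‖ ^ 2 * l x + inner ℝ w x := fun x => by simp [m]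
  have hmA : ∀ x ∈ A, m x = m a := by
    intro x hx
    have := hwL _ (hAL x hx)
    rw [inner_sub_right] at this
    rw [hm, hm, hlA x hx]; linarith
  -- the decomposition of a vector below the face
  have hdec : ∀ x, l x < l a → x - a = L.starProjection (x - a) + (l a - l x) • u x := by
    intro x hx
    have : l a - l x ≠ 0 := by linarith
    simp only [hu, hp, smul_smul, mul_inv_cancel₀ this, one_smul]
    abel
  have hmdec : ∀ x, l x < l a → m x - m a = (l a - l x) * (inner ℝ w (u x) - ‖w‖ ^ 2) := by
    intro x hx
    have h1 : inner ℝ w (x - a) = (l a - l x) * inner ℝ w (u x) := by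
      conv_lhs => rw [hdec x hx]
      rw [inner_add_right, inner_smul_right,
        hwL _ (Submodule.starProjection_apply_mem L _), zero_add]
    rw [inner_sub_right] at h1
    rw [hm, hm]; linear_combination h1
  have hv0eq : m v0 = m a := by
    have := hmdec v0 hv0.2
    rw [← hw, real_inner_self_eq_norm_sq, sub_self, mul_zero] at this
    linarith
  have hkey : ∀ v ∈ V, m v < m a ∨ (m v = m a ∧ v - a ∈ M) := by
    intro v hv
    have hvR := subset_convexHull ℝ V hv
    by_cases hlv : l v < l a
    · have h1 := hmdec v hlv
      have hn : ‖u v‖ ≤ ‖w‖ := hmax v ⟨hv, hlv⟩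
      have hc : 0 < l a - l v := by linarith
      by_cases huv : u v = w
      · right
        rw [huv, real_inner_self_eq_norm_sq, sub_self, mul_zero] at h1
        refine ⟨by linarith, ?_⟩
        rw [hdec v hlv, huv]
        exact Submodule.add_mem_sup (Submodule.starProjection_apply_mem L _)
          (Submodule.smul_mem _ _ (Submodule.mem_span_singleton_self w))
      · left
        have h2 : 0 < ‖w - u v‖ ^ 2 := by
          have : w - u v ≠ 0 := sub_ne_zero.mpr (Ne.symm huv)
          positivity
        rw [norm_sub_sq_real] at h2
        have h3 : ‖u v‖ ^ 2 ≤ ‖w‖ ^ 2 := by gcongr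
        have h4 : inner ℝ w (u v) - ‖w‖ ^ 2 < 0 := by linarith
        have := mul_neg_of_pos_of_neg hc h4
        linarith
    · have hvA := hmemA v hvR (not_lt.mp hlv)
      exact Or.inr ⟨hmA v hvA, Submodule.mem_sup_left (hAL v hvA)⟩
  have hkeyR : ∀ x ∈ convexHull ℝ V, m x < m a ∨ (m x = m a ∧ x - a ∈ M) := by
    have : convexHull ℝ V ⊆ {x | m x < m a ∨ (m x = m a ∧ x - a ∈ M)} := by
      refine convexHull_min (fun v hv => hkey v hv) ?_
      intro x hx y hy α β hα hβ hαβ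
      change m x < m a ∨ (m x = m a ∧ x - a ∈ M) at hx
      change m y < m a ∨ (m y = m a ∧ y - a ∈ M) at hy
      change m (α • x + β • y) < m a ∨ (m (α • x + β • y) = m a ∧ α • x + β • y - a ∈ M)
      simp only [map_add, map_smul, smul_eq_mul]
      have hβ' : β = 1 - α := by linarith
      rcases hα.eq_or_lt with h0 | h0
      · have : β = 1 := by linarith
        subst h0; subst this; simpa using hy
      rcases hβ.eq_or_lt with h1 | h1
      · have : α = 1 := by linarith
        subst h1; subst this; simpa using hx
      rcases hx with hx | ⟨hx, hxM⟩
      · left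
        have hy' : m y ≤ m a := by exact hy.elim le_of_lt (fun h => h.1.le)
        have e1 := mul_lt_mul_of_pos_left hx h0
        have e2 := mul_le_mul_of_nonneg_left hy' hβ
        have : α * m a + β * m a = m a := by rw [← add_mul, hαβ, one_mul]
        linarith
      · rcases hy with hy | ⟨hy, hyM⟩
        · left
          have e2 := mul_lt_mul_of_pos_left hy h1
          have : α * m a + β * m a = m a := by rw [← add_mul, hαβ, one_mul]
          rw [hx]; linarith
        · right
          refine ⟨by rw [hx, hy, ← add_mul, hαβ, one_mul], ?_⟩
          have : α • x + β • y - a = α • (x - a) + β • (y - a) := by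
            rw [hβ']; module
          rw [this]
          exact M.add_mem (M.smul_mem _ hxM) (M.smul_mem _ hyM)
    exact this
  have hle : ∀ x ∈ convexHull ℝ V, m x ≤ m a := fun x hx => by
    rcases hkeyR x hx with h | h
    · exact h.le
    · exact h.1.le
  have hmemB : ∀ x ∈ convexHull ℝ V, m x = m a → x ∈ m.toExposed (convexHull ℝ V) :=
    fun x hx h => ⟨hx, fun y hy => (hle y hy).trans h.ge⟩
  have hAB : A ⊆ m.toExposed (convexHull ℝ V) := fun x hx => hmemB x (hA.subset hx) (hmA x hx)
  refine ⟨m, hAB, le_antisymm ?_ ?_⟩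
  · have h1 : vectorSpan ℝ (m.toExposed (convexHull ℝ V)) ≤ M := by
      rw [vectorSpan_eq_span_vsub_set_right ℝ (hAB ha), Submodule.span_le]
      rintro _ ⟨x, hx, rfl⟩
      rcases hkeyR x hx.1 with h | h
      · exact absurd (hx.2 a haR.1) (not_le.mpr h)
      · exact h.2
    refine (Submodule.finrank_mono h1).trans ?_
    refine (Submodule.finrank_add_le_finrank_add_finrank L (Submodule.span ℝ {w})).trans ?_
    have := finrank_span_le_card (R := ℝ) ({w} : Set (EuclideanSpace ℝ (Fin d)))
    simp only [Set.toFinset_singleton, Finset.card_singleton] at this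
    exact Nat.add_le_add_left this _
  · apply Submodule.finrank_lt_finrank_of_lt
    refine lt_of_le_of_ne (vectorSpan_mono ℝ hAB) ?_
    intro heq
    have h1 : v0 - a ∈ vectorSpan ℝ (m.toExposed (convexHull ℝ V)) :=
      vsub_mem_vectorSpan ℝ (hmemB v0 (subset_convexHull ℝ V hv0.1) hv0eq) (hAB ha)
    rw [← heq] at h1
    have h2 : L ≤ LinearMap.ker l.toLinearMap := by
      rw [hL, vectorSpan_eq_span_vsub_set_right ℝ ha, Submodule.span_le]
      rintro _ ⟨x, hx, rfl⟩
      simp [hlA x hx]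
    have h3 := h2 h1
    simp only [LinearMap.mem_ker, ContinuousLinearMap.coe_coe, map_sub] at h3
    linarith [hv0.2]

/-- Nested exposed faces of equal dimension coincide. -/
theorem exposed_eq_of_finrank_eq {d : ℕ} (Q G G' : Set (EuclideanSpace ℝ (Fin d)))
    (hG : IsExposed ℝ Q G) (hne : G.Nonempty) (hG' : G' ⊆ Q) (hGG : G ⊆ G')
    (h : Module.finrank ℝ (vectorSpan ℝ G') ≤ Module.finrank ℝ (vectorSpan ℝ G)) : G' = G := by
  refine Set.Subset.antisymm ?_ hGG
  have heq := Submodule.eq_of_le_of_finrank_le (vectorSpan_mono ℝ hGG) h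
  obtain ⟨l, hl⟩ := hG hne
  obtain ⟨a, ha⟩ := hne
  have ha' := ha
  rw [hl] at ha'
  have h2 : vectorSpan ℝ G ≤ LinearMap.ker l.toLinearMap := by
    rw [vectorSpan_eq_span_vsub_set_right ℝ ha, Submodule.span_le]
    rintro _ ⟨x, hx, rfl⟩
    rw [hl] at hx
    have := le_antisymm (ha'.2 x hx.1) (hx.2 a ha'.1)
    simp [this]
  intro x hx
  have h3 : x - a ∈ vectorSpan ℝ G' := vsub_mem_vectorSpan ℝ hx (hGG ha)
  rw [← heq] at h3
  have h4 := h2 h3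
  simp only [LinearMap.mem_ker, ContinuousLinearMap.coe_coe, map_sub] at h4
  rw [hl]
  exact ⟨hG' hx, fun y hy => (ha'.2 y hy).trans (by linarith)⟩

/-- The face of a Minkowski sum in a direction is the sum of the faces. -/
theorem toExposed_add {d : ℕ} (P Q : Set (EuclideanSpace ℝ (Fin d)))
    (m : StrongDual ℝ (EuclideanSpace ℝ (Fin d))) (x y : EuclideanSpace ℝ (Fin d))
    (hx : x ∈ P) (hy : y ∈ Q) (h : x + y ∈ m.toExposed (P + Q)) :
    x ∈ m.toExposed P ∧ y ∈ m.toExposed Q := by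
  refine ⟨⟨hx, fun z hz => ?_⟩, ⟨hy, fun z hz => ?_⟩⟩
  · have := h.2 (z + y) (Set.add_mem_add hz hy)
    simp only [map_add] at this; linarith
  · have := h.2 (x + z) (Set.add_mem_add hx hz)
    simp only [map_add] at this; linarith

theorem superface_minkowski_sum {d : ℕ} (s t : Set (EuclideanSpace ℝ (Fin d)))
    (hs : s.Finite) (ht : t.Finite)
    (P Q : Set (EuclideanSpace ℝ (Fin d)))
    (hP : P = convexHull ℝ s) (hQ : Q = convexHull ℝ t)
    (hnd : ∀ F₁ G₁ : Set (EuclideanSpace ℝ (Fin d)),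
      F₁.Nonempty → IsExposed ℝ P F₁ → G₁.Nonempty → IsExposed ℝ Q G₁ →
      Module.finrank ℝ (vectorSpan ℝ (F₁ + G₁)) =
        Module.finrank ℝ (vectorSpan ℝ F₁) + Module.finrank ℝ (vectorSpan ℝ G₁))
    (F G : Set (EuclideanSpace ℝ (Fin d)))
    (hF : IsExposed ℝ P F) (hFne : F.Nonempty)
    (hG : IsExposed ℝ Q G) (hGne : G.Nonempty)
    (hFG : IsExposed ℝ (P + Q) (F + G))
    (k : ℕ) (hk : k = Module.finrank ℝ (vectorSpan ℝ (F + G)))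
    (hlt : k + 1 < Module.finrank ℝ (vectorSpan ℝ (P + Q))) :
    (∃ F' : Set (EuclideanSpace ℝ (Fin d)), IsExposed ℝ P F' ∧ F ⊆ F' ∧
        IsExposed ℝ (P + Q) (F' + G) ∧ F + G ⊆ F' + G ∧
        Module.finrank ℝ (vectorSpan ℝ (F' + G)) = k + 1) ∨
      (∃ G' : Set (EuclideanSpace ℝ (Fin d)), IsExposed ℝ Q G' ∧ G ⊆ G' ∧
        IsExposed ℝ (P + Q) (F + G') ∧ F + G ⊆ F + G' ∧
        Module.finrank ℝ (vectorSpan ℝ (F + G')) = k + 1) := by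
  have hPQ : P + Q = convexHull ℝ (s + t) := by rw [hP, hQ, convexHull_add]
  obtain ⟨m, hsub, hrank⟩ := exists_immediate_superface (s + t) (F + G) (hs.add ht)
    (hPQ ▸ hFG) (hFne.add hGne) (by rw [← hPQ]; omega)
  rw [← hPQ] at hsub hrank
  have hFF : F ⊆ m.toExposed P := by
    intro x hx
    obtain ⟨y, hy⟩ := hGne
    exact (toExposed_add P Q m x y (hF.subset hx) (hG.subset hy)
      (hsub (Set.add_mem_add hx hy))).1
  have hGG : G ⊆ m.toExposed Q := by
    intro y hy
    obtain ⟨x, hx⟩ := hFne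
    exact (toExposed_add P Q m x y (hF.subset hx) (hG.subset hy)
      (hsub (Set.add_mem_add hx hy))).2
  have hsum : m.toExposed (P + Q) = m.toExposed P + m.toExposed Q := by
    apply Set.Subset.antisymm
    · intro z hz
      obtain ⟨x, hx, y, hy, rfl⟩ := Set.mem_add.mp hz.1
      have := toExposed_add P Q m x y hx hy hz
      exact Set.add_mem_add this.1 this.2
    · intro z hz
      obtain ⟨x, hx, y, hy, rfl⟩ := Set.mem_add.mp hz
      refine ⟨Set.add_mem_add hx.1 hy.1, fun z hz => ?_⟩
      obtain ⟨x', hx', y', hy', rfl⟩ := Set.mem_add.mp hz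
      simp only [map_add]
      exact add_le_add (hx.2 x' hx') (hy.2 y' hy')
  have hexP : IsExposed ℝ P (m.toExposed P) := ContinuousLinearMap.toExposed.isExposed
  have hexQ : IsExposed ℝ Q (m.toExposed Q) := ContinuousLinearMap.toExposed.isExposed
  have hexPQ : IsExposed ℝ (P + Q) (m.toExposed (P + Q)) :=
    ContinuousLinearMap.toExposed.isExposed
  have e1 := hnd F G hFne hF hGne hG
  have e2 := hnd _ _ (hFne.mono hFF) hexP (hGne.mono hGG) hexQ
  rw [hsum] at hrank hexPQ
  have i1 := Submodule.finrank_mono (vectorSpan_mono ℝ hFF)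
  have i2 := Submodule.finrank_mono (vectorSpan_mono ℝ hGG)
  rw [← hk] at hrank
  by_cases hc : Module.finrank ℝ (vectorSpan ℝ (m.toExposed Q)) ≤
      Module.finrank ℝ (vectorSpan ℝ G)
  · have hEq := exposed_eq_of_finrank_eq Q G _ hG hGne hexQ.subset hGG hc
    rw [hEq] at hexPQ hrank
    exact Or.inl ⟨_, hexP, hFF, hexPQ, Set.add_subset_add_right hFF, hrank⟩
  · have hEq := exposed_eq_of_finrank_eq P F _ hF hFne hexP.subset hFF (by omega)
    rw [hEq] at hexPQ hrank
    exact Or.inr ⟨_, hexQ, hGG, hexPQ, Set.add_subset_add_left hGG, hrank⟩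
end

section
/- Let E be a real normed vector space, let I be a finite nonempty index set, and let A : I → Set E be a family of sets. Every nonempty exposed face C of the Minkowski sum ∑_{i ∈ I} A i decomposes as C = ∑_{i ∈ I} F i, where for each i ∈ I, F i is a nonempty exposed face of A i. -/
open Pointwise

theorem exposedFace_finset_minkowski_sum_decomposition {E : Type*}
    [NormedAddCommGroup E] [NormedSpace ℝ E] {ι : Type*} (I : Finset ι)
    (hI : I.Nonempty) (A : ι → Set E) (C : Set E)
    (hC : IsExposed ℝ (∑ i ∈ I, A i) C) (hCne : C.Nonempty) :
    ∃ F : ι → Set E, (∀ i ∈ I, (F i).Nonempty ∧ IsExposed ℝ (A i) (F i)) ∧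
      C = ∑ i ∈ I, F i := by
  classical
  obtain ⟨l, rfl⟩ := hC hCne
  have key : ∀ g : ι → E, (∀ i ∈ I, g i ∈ A i) →
      (∀ y ∈ ∑ i ∈ I, A i, l y ≤ l (∑ i ∈ I, g i)) →
      ∀ i ∈ I, ∀ y ∈ A i, l y ≤ l (g i) := by
    intro g hg hmax i hi y hy
    have h := hmax (∑ j ∈ I, Function.update g i y j) (by
      refine Set.finsetSum_mem_finsetSum _ _ _ ?_
      intro j hj
      by_cases hji : j = i
      · subst hji
        simpa using hy
      · simpa [Function.update_of_ne hji] using hg j hj)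
    rw [Finset.sum_update_of_mem hi, ← Finset.add_sum_erase I g hi,
      ← Finset.erase_eq, map_add, map_add] at h
    linarith
  refine ⟨fun i => {x ∈ A i | ∀ y ∈ A i, l y ≤ l x}, ?_, ?_⟩
  · intro i hi
    refine ⟨?_, fun _ => ⟨l, rfl⟩⟩
    obtain ⟨x, hx, hmax⟩ := hCne
    obtain ⟨g, hg, rfl⟩ := (Set.mem_finsetSum _ _ _).1 hx
    exact ⟨g i, hg hi, key g (fun i hi => hg hi) hmax i hi⟩
  · ext x
    constructor
    · rintro ⟨hx, hmax⟩
      obtain ⟨g, hg, rfl⟩ := (Set.mem_finsetSum _ _ _).1 hx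
      exact Set.finsetSum_mem_finsetSum _ _ _ fun i hi =>
        ⟨hg hi, key g (fun i hi => hg hi) hmax i hi⟩
    · intro hx
      obtain ⟨g, hg, rfl⟩ := (Set.mem_finsetSum _ _ _).1 hx
      refine ⟨Set.finsetSum_mem_finsetSum _ _ _ fun i hi => (hg hi).1, ?_⟩
      intro y hy
      obtain ⟨k, hk, rfl⟩ := (Set.mem_finsetSum _ _ _).1 hy
      rw [map_sum, map_sum]
      exact Finset.sum_le_sum fun i hi => (hg hi).2 _ (hk hi)
end

section
/- Let E be a real vector space and A, B ⊆ E arbitrary sets. If x is an extreme point of A + B, then its decomposition as a sum is unique: whenever a, a' ∈ A and b, b' ∈ B satisfy x = a + b and x = a' + b', one has a = a' and b = b'. -/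
open Pointwise

theorem extremePoint_minkowski_sum_unique_decomposition {E : Type*} [AddCommGroup E]
    [Module ℝ E] (A B : Set E) (x : E) (hx : x ∈ Set.extremePoints ℝ (A + B))
    (a a' b b' : E) (ha : a ∈ A) (ha' : a' ∈ A) (hb : b ∈ B) (hb' : b' ∈ B)
    (hab : x = a + b) (hab' : x = a' + b') :
    a = a' ∧ b = b' := by
  have hseg : x ∈ openSegment ℝ (a + b') (a' + b) := by
    refine ⟨1 / 2, 1 / 2, by norm_num, by norm_num, by norm_num, ?_⟩
    have h2 : (a + b') + (a' + b) = x + x := by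
      nth_rewrite 1 [hab]
      rw [hab']
      abel
    rw [← smul_add, h2, ← two_smul ℝ x, smul_smul]
    norm_num
  have h1 : a + b' = x :=
    hx.2 (Set.add_mem_add ha hb') (Set.add_mem_add ha' hb) hseg
  have hbb : b = b' := add_left_cancel (hab.symm.trans h1.symm)
  refine ⟨?_, hbb⟩
  rw [← hbb] at hab'
  exact add_right_cancel (hab.symm.trans hab')
end

section
/- Let E = EuclideanSpace ℝ (Fin 2) and let s, t ⊆ E be finite sets, with P = convexHull ℝ s and Q = convexHull ℝ t. Then the number of extreme points of P + Q is at most the number of extreme points of P plus the number of extreme points of Q: Set.ncard (Set.extremePoints ℝ (P + Q)) ≤ Set.ncard (Set.extremePoints ℝ P) + Set.ncard (Set.extremePoints ℝ Q). -/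
open Pointwise

namespace MinkAux

abbrev E2 := EuclideanSpace ℝ (Fin 2)

def cr (u v : E2) : ℝ := u 0 * v 1 - u 1 * v 0
def dt (u v : E2) : ℝ := u 0 * v 0 + u 1 * v 1

/-- `p` is the lexicographic minimum of `S` for the pair (cross with `e`, dot with `e`). -/
def Lex (e : E2) (S : Set E2) (p : E2) : Prop :=
  ∀ x ∈ S, 0 < cr e (x - p) ∨ (cr e (x - p) = 0 ∧ 0 ≤ dt e (x - p))

def T (s t : Set E2) (a b : E2) : Prop :=
  ∃ e : E2, e ≠ 0 ∧ Lex e s a ∧ Lex e t b ∧ a ∈ s ∧ b ∈ t ∧ a + e ∈ s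

lemma dt_pos {e : E2} (he : e ≠ 0) : 0 < e 0 ^ 2 + e 1 ^ 2 := by
  by_contra h
  apply he
  have h0 : e 0 = 0 := by nlinarith [sq_nonneg (e 0), sq_nonneg (e 1)]
  have h1 : e 1 = 0 := by nlinarith [sq_nonneg (e 0), sq_nonneg (e 1)]
  ext i
  fin_cases i
  · simpa using h0
  · simpa using h1

/-- a vector parallel to `d` is a multiple of `d` -/
lemma par {d e : E2} (hd : d ≠ 0) (h : cr d e = 0) :
    e = (dt d e / (d 0 ^ 2 + d 1 ^ 2)) • d := by
  have hp := dt_pos hd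
  unfold cr at h
  ext i
  fin_cases i
  · simp only [dt, Fin.zero_eta, PiLp.smul_apply, smul_eq_mul]
    field_simp
    linear_combination (-d 1) * h
  · simp only [dt, Fin.mk_one, PiLp.smul_apply, smul_eq_mul]
    field_simp
    linear_combination (d 0) * h

lemma cr_smul (l : ℝ) (u v : E2) : cr (l • u) v = l * cr u v := by
  simp [cr]; ring
lemma dt_smul (l : ℝ) (u v : E2) : dt (l • u) v = l * dt u v := by
  simp [dt]; ring
lemma cr_neg (u v : E2) : cr u (-v) = - cr u v := by
  simp [cr]; ring
lemma dt_neg (u v : E2) : dt u (-v) = - dt u v := by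
  simp [dt]; ring
lemma cr_add (u v w : E2) : cr u (v + w) = cr u v + cr u w := by
  simp [cr]; ring
lemma cr_swap (u v : E2) : cr u v = - cr v u := by
  simp [cr]; ring
lemma dt_swap (u v : E2) : dt u v = dt v u := by
  simp [dt]; ring

lemma Lex.smul {e : E2} {S : Set E2} {p : E2} (h : Lex e S p) {l : ℝ} (hl : 0 < l) :
    Lex (l • e) S p := by
  intro x hx
  rw [cr_smul, dt_smul]
  rcases h x hx with h | ⟨h, h'⟩
  · left; positivity
  · right; exact ⟨by simp [h], by positivity⟩

lemma Lex.cr_nonneg {e : E2} {S : Set E2} {p : E2} (h : Lex e S p) {x : E2} (hx : x ∈ S) :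
    0 ≤ cr e (x - p) := by
  rcases h x hx with h | ⟨h, h'⟩ <;> linarith

lemma Lex.dt_nonneg {e : E2} {S : Set E2} {p : E2} (h : Lex e S p) {x : E2} (hx : x ∈ S)
    (h0 : cr e (x - p) = 0) : 0 ≤ dt e (x - p) := by
  rcases h x hx with h | ⟨h, h'⟩ <;> linarith

lemma Lex.unique {e : E2} (he : e ≠ 0) {S : Set E2} {p q : E2} (hp : p ∈ S) (hq : q ∈ S)
    (h : Lex e S p) (h' : Lex e S q) : p = q := by
  have e1 : p - q = -(q - p) := by abel
  have h1 := h.cr_nonneg hq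
  have h2 := h'.cr_nonneg hp
  rw [e1, cr_neg] at h2
  have h0 : cr e (q - p) = 0 := by linarith
  have h3 := h.dt_nonneg hq h0
  have h4 := h'.dt_nonneg hp (by rw [e1, cr_neg, h0, neg_zero])
  rw [e1, dt_neg] at h4
  have h5 := par he h0
  have h6 : dt e (q - p) = 0 := by linarith
  rw [h6, zero_div, zero_smul] at h5
  exact (sub_eq_zero.1 h5).symm

lemma pos_par {d e : E2} (hd : d ≠ 0) (he : e ≠ 0) (h : cr d e = 0) (h' : 0 ≤ dt d e) :
    ∃ l : ℝ, 0 < l ∧ e = l • d := by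
  refine ⟨_, ?_, par hd h⟩
  refine div_pos (lt_of_le_of_ne h' ?_) (dt_pos hd)
  intro h0
  apply he
  rw [par hd h, ← h0, zero_div, zero_smul]

lemma T.inj {s t : Set E2} {a b c : E2} (h : T s t a b) (h' : T s t a c) : b = c := by
  obtain ⟨e, he, hs, ht, -, hb, hae⟩ := h
  obtain ⟨e', he', hs', ht', -, hc, hae'⟩ := h'
  have h1 := hs.cr_nonneg hae'
  have h2 := hs'.cr_nonneg hae
  have h3 := hs.dt_nonneg hae'
  rw [add_sub_cancel_left] at h1 h2 h3
  rw [cr_swap] at h2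
  have h0 : cr e e' = 0 := by linarith
  obtain ⟨l, hl, rfl⟩ := pos_par he he' h0 (h3 h0)
  exact Lex.unique he' hb hc (ht.smul hl) ht'

/-- finite set strictly inside an open half plane seen from `p` has a first direction -/
lemma exists_lex {S : Set E2} (hS : S.Finite) {p : E2} (hD : (S \ {p}).Nonempty)
    (f : E2 →L[ℝ] ℝ) (hf : ∀ x ∈ S \ {p}, f x < f p) :
    ∃ x ∈ S, x - p ≠ 0 ∧ Lex (x - p) S p := by
  obtain ⟨w0, w1, hw⟩ : ∃ w0 w1 : ℝ, ∀ x : E2, f x = w0 * x 0 + w1 * x 1 := by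
    refine ⟨f (EuclideanSpace.single 0 1), f (EuclideanSpace.single 1 1), fun x => ?_⟩
    have : x = x 0 • EuclideanSpace.single 0 (1:ℝ) + x 1 • EuclideanSpace.single 1 (1:ℝ) := by
      ext i
      fin_cases i <;> simp
    conv_lhs => rw [this]
    simp only [map_add, map_smul, smul_eq_mul]
    ring
  let F : E2 → ℝ := fun d => -(w0 * d 0 + w1 * d 1)
  let G : E2 → ℝ := fun d => -w1 * d 0 + w0 * d 1
  have hF : ∀ x ∈ S \ {p}, 0 < F (x - p) := by
    intro x hx
    have := hf x hx
    rw [hw, hw] at this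
    simp only [F, PiLp.sub_apply]
    linarith
  obtain ⟨x, hx, hmax⟩ := Set.exists_max_image (S \ {p}) (fun x => G (x - p) / F (x - p))
    (hS.subset Set.sdiff_subset) hD
  have hxp : x - p ≠ 0 := sub_ne_zero.2 hx.2
  have hid : ∀ d d' : E2, (w0 ^ 2 + w1 ^ 2) * cr d d' = G d * F d' - G d' * F d := by
    intro d d'; simp only [cr, F, G]; ring
  have hw2 : 0 < w0 ^ 2 + w1 ^ 2 := by
    have := hF x hx
    by_contra h
    have h0 : w0 = 0 := by nlinarith [sq_nonneg w0, sq_nonneg w1]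
    have h1 : w1 = 0 := by nlinarith [sq_nonneg w0, sq_nonneg w1]
    simp [F, h0, h1] at this
  refine ⟨x, hx.1, hxp, fun y hy => ?_⟩
  by_cases hyp : y = p
  · right; simp [hyp, cr, dt]
  have hy' : y ∈ S \ {p} := ⟨hy, hyp⟩
  have h1 := hmax y hy'
  have hFx := hF x hx
  have hFy := hF y hy'
  rw [div_le_div_iff₀ hFy hFx] at h1
  have h2 := hid (x - p) (y - p)
  have h3 : 0 ≤ cr (x - p) (y - p) := by
    by_contra hc
    nlinarith
  rcases h3.lt_or_eq with h3 | h3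
  · exact Or.inl h3
  · right
    refine ⟨h3.symm, ?_⟩
    have h4 := par hxp h3.symm
    set l := dt (x - p) (y - p) / ((x - p) 0 ^ 2 + (x - p) 1 ^ 2) with hl
    have h5 : F (y - p) = l * F (x - p) := by
      rw [h4]; simp only [F, PiLp.smul_apply, smul_eq_mul]; ring
    have h6 : 0 < l := by
      by_contra hc
      nlinarith
    have h7 := dt_pos hxp
    have h8 : dt (x - p) (y - p) = l * ((x - p) 0 ^ 2 + (x - p) 1 ^ 2) := by
      rw [hl]; field_simp
    rw [h8]; positivity

lemma T_or {s t : Set E2} {a b x : E2} (ha : a ∈ s) (hb : b ∈ t) (hx : x ∈ s + t)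
    (hne : x - (a + b) ≠ 0) (hL : Lex (x - (a + b)) (s + t) (a + b)) :
    T s t a b ∨ T t s b a := by
  obtain ⟨a', ha', b', hb', rfl⟩ := hx
  simp only at hne hL
  set d := a' + b' - (a + b) with hd
  have hs : Lex d s a := by
    intro y hy
    have := hL (y + b) (Set.add_mem_add hy hb)
    rwa [add_sub_add_right_eq_sub] at this
  have ht : Lex d t b := by
    intro y hy
    have := hL (a + y) (Set.add_mem_add ha hy)
    rwa [add_sub_add_left_eq_sub] at this
  have h1 := hs.cr_nonneg ha'
  have h2 := ht.cr_nonneg hb'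
  have hsum : (a' - a) + (b' - b) = d := by rw [hd]; abel
  have h3 : cr d (a' - a) + cr d (b' - b) = 0 := by
    rw [← cr_add, hsum]; simp [cr]; ring
  have h4 : cr d (a' - a) = 0 := by linarith
  have h5 : cr d (b' - b) = 0 := by linarith
  by_cases h0 : a' - a = 0
  · right
    have h6 : b' - b ≠ 0 := by
      intro h; apply hne; rw [← hsum, h0, h, add_zero]
    obtain ⟨l, hl, he⟩ := pos_par hne h6 h5 (ht.dt_nonneg hb' h5)
    exact ⟨b' - b, h6, he ▸ ht.smul hl, he ▸ hs.smul hl, hb, ha, by simpa using hb'⟩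
  · left
    obtain ⟨l, hl, he⟩ := pos_par hne h0 h4 (hs.dt_nonneg ha' h4)
    exact ⟨a' - a, h0, he ▸ hs.smul hl, he ▸ ht.smul hl, ha, hb, by simpa using ha'⟩

lemma ext_left {P Q : Set E2} {a b : E2} (ha : a ∈ P) (hb : b ∈ Q)
    (h : a + b ∈ Set.extremePoints ℝ (P + Q)) : a ∈ Set.extremePoints ℝ P := by
  rw [mem_extremePoints] at h ⊢
  refine ⟨ha, fun x hx y hy hxy => ?_⟩
  have := h.2 (x + b) (Set.add_mem_add hx hb) (y + b) (Set.add_mem_add hy hb) (by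
    obtain ⟨u, v, hu, hv, huv, rfl⟩ := hxy
    refine ⟨u, v, hu, hv, huv, ?_⟩
    rw [smul_add, smul_add, add_add_add_comm, ← add_smul, huv, one_smul])
  exact ⟨add_right_cancel this.1, add_right_cancel this.2⟩

lemma main (s t : Set E2) (hs : s.Finite) (ht : t.Finite) :
    Set.ncard (Set.extremePoints ℝ (convexHull ℝ s + convexHull ℝ t)) ≤
      Set.ncard (Set.extremePoints ℝ (convexHull ℝ s)) +
        Set.ncard (Set.extremePoints ℝ (convexHull ℝ t)) := by
  have hfs : (Set.extremePoints ℝ (convexHull ℝ s)).Finite :=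
    hs.subset extremePoints_convexHull_subset
  have hft : (Set.extremePoints ℝ (convexHull ℝ t)).Finite :=
    ht.subset extremePoints_convexHull_subset
  set X := Set.extremePoints ℝ (convexHull ℝ s + convexHull ℝ t) with hX
  have hXsub : X ⊆ s + t := by
    rw [hX, ← convexHull_add]; exact extremePoints_convexHull_subset
  have hdec : ∀ p ∈ X, ∀ a ∈ s, ∀ b ∈ t, a + b = p →
      a ∈ Set.extremePoints ℝ (convexHull ℝ s) ∧ b ∈ Set.extremePoints ℝ (convexHull ℝ t) := by
    rintro p hp a ha b hb rfl
    have ha' := subset_convexHull ℝ s ha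
    have hb' := subset_convexHull ℝ t hb
    refine ⟨ext_left ha' hb' hp, ext_left hb' ha' ?_⟩
    rw [add_comm b a, add_comm (convexHull ℝ t)]
    exact hp
  by_cases hsub : (s + t).Subsingleton
  · rcases X.eq_empty_or_nonempty with h | ⟨p, hp⟩
    · simp [h]
    · obtain ⟨a, ha, b, hb, hab⟩ := hXsub hp
      have h1 := (Set.ncard_pos hfs).2 ⟨a, (hdec p hp a ha b hb hab).1⟩
      have h2 : X.ncard ≤ 1 := 
        (Set.ncard_le_one ((hs.add ht).subset hXsub)).2 (fun x hx y hy => hsub (hXsub hx) (hXsub hy))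
      omega
  have key : ∀ p ∈ X, ∃ z : E2 ⊕ E2,
      (∃ a b, a + b = p ∧ a ∈ s ∧ b ∈ t ∧ T s t a b ∧ z = Sum.inl a) ∨
      (∃ a b, a + b = p ∧ a ∈ s ∧ b ∈ t ∧ T t s b a ∧ z = Sum.inr b) := by
    intro p hp
    obtain ⟨a, ha, b, hb, hab⟩ := hXsub hp
    simp only at hab
    have hD : ((s + t) \ {p}).Nonempty := by
      rw [Set.nonempty_iff_ne_empty]
      intro h
      apply hsub
      exact Set.subsingleton_singleton.anti (Set.sdiff_eq_empty.1 h)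
    have hnot : p ∉ convexHull ℝ ((s + t) \ {p}) := by
      intro hmem
      have h1 := ((convex_convexHull ℝ s).add
        (convex_convexHull ℝ t)).mem_extremePoints_iff_mem_sdiff_convexHull_sdiff.1 hp
      refine h1.2 (convexHull_mono ?_ hmem)
      exact Set.sdiff_subset_sdiff_left
        (Set.add_subset_add (subset_convexHull ℝ s) (subset_convexHull ℝ t))
    have hfin : ((s + t) \ {p}).Finite := (hs.add ht).subset Set.sdiff_subset
    obtain ⟨f, u, h1, h2⟩ := geometric_hahn_banach_closed_point
      (convex_convexHull ℝ ((s + t) \ {p})) (hfin.isClosed_convexHull ℝ) hnot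
    obtain ⟨x, hx, hne, hL⟩ := exists_lex (hs.add ht) hD f
      (fun x hx => (h1 x (subset_convexHull ℝ _ hx)).trans h2)
    subst hab
    rcases T_or ha hb hx hne hL with h | h
    · exact ⟨_, Or.inl ⟨a, b, rfl, ha, hb, h, rfl⟩⟩
    · exact ⟨_, Or.inr ⟨a, b, rfl, ha, hb, h, rfl⟩⟩
  choose! φ hφ using key
  calc X.ncard ≤ (Sum.inl '' (Set.extremePoints ℝ (convexHull ℝ s)) ∪
        Sum.inr '' (Set.extremePoints ℝ (convexHull ℝ t)) : Set (E2 ⊕ E2)).ncard := by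
        refine Set.ncard_le_ncard_of_injOn φ ?_ ?_ ((hfs.image _).union (hft.image _))
        · intro p hp
          rcases hφ p hp with ⟨a, b, hab, ha, hb, h, hz⟩ | ⟨a, b, hab, ha, hb, h, hz⟩
          · rw [hz]; exact Or.inl ⟨a, (hdec p hp a ha b hb hab).1, rfl⟩
          · rw [hz]; exact Or.inr ⟨b, (hdec p hp a ha b hb hab).2, rfl⟩
        · intro p hp q hq hpq
          rcases hφ p hp with ⟨a, b, hab, ha, hb, h, hz⟩ | ⟨a, b, hab, ha, hb, h, hz⟩ <;>
          rcases hφ q hq with ⟨a', b', hab', ha', hb', h', hz'⟩ | ⟨a', b', hab', ha', hb', h', hz'⟩ <;>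
          rw [hz, hz'] at hpq
          · obtain rfl := Sum.inl.inj hpq
            rw [← hab, ← hab', h.inj h']
          · cases hpq
          · cases hpq
          · obtain rfl := Sum.inr.inj hpq
            rw [← hab, ← hab', h.inj h']
    _ ≤ _ := Set.ncard_union_le _ _
    _ ≤ _ := Nat.add_le_add (Set.ncard_image_le hfs) (Set.ncard_image_le hft)

end MinkAux

theorem ncard_extremePoints_minkowski_sum_polygons
    (s t : Set (EuclideanSpace ℝ (Fin 2))) (hs : s.Finite) (ht : t.Finite)
    (P Q : Set (EuclideanSpace ℝ (Fin 2)))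
    (hP : P = convexHull ℝ s) (hQ : Q = convexHull ℝ t) :
    Set.ncard (Set.extremePoints ℝ (P + Q)) ≤
      Set.ncard (Set.extremePoints ℝ P) + Set.ncard (Set.extremePoints ℝ Q) := by
  subst hP hQ
  exact MinkAux.main s t hs ht
end

section
/- Let E = EuclideanSpace ℝ (Fin 2), let I be a finite nonempty index set, and let s : I → Set E be a family of finite sets, with P i = convexHull ℝ (s i) for each i. Then the number of extreme points of the Minkowski sum ∑_{i ∈ I} P i is at most the sum of the numbers of extreme points of the P i: Set.ncard (Set.extremePoints ℝ (∑_{i ∈ I} P i)) ≤ ∑_{i ∈ I} Set.ncard (Set.extremePoints ℝ (P i)). -/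
open Pointwise

namespace MinkPoly

abbrev E2 := EuclideanSpace ℝ (Fin 2)

/-- `v` starts a (counterclockwise) edge of `R` in direction `d`. -/
def Supp (R : Set E2) (v d n : E2) : Prop :=
  0 < n 0 * d 0 + n 1 * d 1 ∧
  ∀ x ∈ R, 0 ≤ d 0 * (x 1 - v 1) - d 1 * (x 0 - v 0) ∧
    0 ≤ n 0 * (x 0 - v 0) + n 1 * (x 1 - v 1)

def Good (P Q : Set E2) (v p : E2) : Prop :=
  p ∈ Set.extremePoints ℝ P ∧ ∃ d n q : E2, v = p + q ∧ q ∈ Q ∧ p + d ∈ P ∧ Supp (P + Q) v d n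

lemma real_aux (a b c e m k m' k' u w : ℝ) (h1 : 0 < m * a + k * b) (h2 : 0 < m' * c + k' * e)
    (h3 : 0 ≤ a * e - b * c) (h4 : 0 ≤ c * b - e * a) (h5 : 0 ≤ m * c + k * e)
    (h7 : 0 ≤ a * w - b * u) (h8 : 0 ≤ c * (-w) - e * (-u))
    (h9 : 0 ≤ m * u + k * w) (h10 : 0 ≤ m' * (-u) + k' * (-w)) : u = 0 ∧ w = 0 := by
  have h0 : a * e - b * c = 0 := by linarith
  obtain ⟨t, ht⟩ : ∃ t, t = (m * c + k * e) / (m * a + k * b) := ⟨_, rfl⟩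
  have ht0 : 0 ≤ t := by rw [ht]; positivity
  have hc : c = t * a := by
    rw [ht]; field_simp; linear_combination (-k) * h0
  have he : e = t * b := by
    rw [ht]; field_simp; linear_combination (m) * h0
  have htp : 0 < t := by
    rcases ht0.lt_or_eq with h | h
    · exact h
    · rw [hc, he, ← h] at h2; simp at h2
  subst hc he
  have hz : a * w - b * u = 0 := by
    have : t * (a * w - b * u) ≤ 0 := by linarith
    have := nonpos_of_mul_nonpos_right this htp
    linarith
  obtain ⟨s, hs⟩ : ∃ s, s = (m * u + k * w) / (m * a + k * b) := ⟨_, rfl⟩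
  have hs0 : 0 ≤ s := by rw [hs]; positivity
  have hu : u = s * a := by
    rw [hs]; field_simp; linear_combination (-k) * hz
  have hw : w = s * b := by
    rw [hs]; field_simp; linear_combination (m) * hz
  subst hu hw
  have h2' : 0 < m' * a + k' * b := by
    have : 0 < t * (m' * a + k' * b) := by linarith
    exact (mul_pos_iff_of_pos_left htp).1 this
  have : s * (m' * a + k' * b) ≤ 0 := by linarith
  have : s ≤ 0 := nonpos_of_mul_nonpos_left this h2'
  have : s = 0 := le_antisymm this hs0
  simp [this]

lemma good_unique {P Q : Set E2} {v v' p : E2} (h : Good P Q v p) (h' : Good P Q v' p) :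
    v = v' := by
  obtain ⟨hp, d, n, q, rfl, hq, hd, hn, hx⟩ := h
  obtain ⟨-, d', n', q', rfl, hq', hd', hn', hx'⟩ := h'
  have A := hx _ (Set.add_mem_add hd' hq)
  have B := hx _ (Set.add_mem_add hp.1 hq')
  have A' := hx' _ (Set.add_mem_add hd hq')
  have B' := hx' _ (Set.add_mem_add hp.1 hq)
  simp only [PiLp.add_apply] at A B A' B'
  have := real_aux (d 0) (d 1) (d' 0) (d' 1) (n 0) (n 1) (n' 0) (n' 1) (q' 0 - q 0) (q' 1 - q 1)
    hn hn' (by linarith [A.1]) (by linarith [A'.1]) (by linarith [A.2])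
    (by linarith [B.1]) (by linarith [B'.1]) (by linarith [B.2]) (by linarith [B'.2])
  congr 1
  ext i
  fin_cases i
  · simp; linarith [this.1]
  · simp; linarith [this.2]

lemma ncard_good {P Q : Set E2} (hP : (Set.extremePoints ℝ P).Finite) :
    {v | ∃ p, Good P Q v p}.Finite ∧
    {v | ∃ p, Good P Q v p}.ncard ≤ (Set.extremePoints ℝ P).ncard := by
  classical
  choose! f hf using fun (v : E2) (h : ∃ p, Good P Q v p) => h
  have hm : Set.MapsTo f {v | ∃ p, Good P Q v p} (Set.extremePoints ℝ P) :=
    fun v hv => (hf v hv).1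
  have hi : Set.InjOn f {v | ∃ p, Good P Q v p} := by
    intro v hv w hw h
    have h1 := hf v hv
    rw [h] at h1
    exact good_unique h1 (hf w hw)
  exact ⟨Set.Finite.of_injOn hm hi hP, Set.ncard_le_ncard_of_injOn f hm hi hP⟩

lemma ext_left {P Q : Set E2} {p q : E2} (hp : p ∈ P) (hq : q ∈ Q)
    (h : p + q ∈ Set.extremePoints ℝ (P + Q)) : p ∈ Set.extremePoints ℝ P := by
  refine ⟨hp, fun x hx y hy hxy => ?_⟩
  have := h.2 (Set.add_mem_add hx hq) (Set.add_mem_add hy hq) ?_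
  · exact add_right_cancel this
  · obtain ⟨a, b, ha, hb, hab, rfl⟩ := hxy
    refine ⟨a, b, ha, hb, hab, ?_⟩
    rw [smul_add, smul_add, add_add_add_comm, ← add_smul, hab, one_smul]

lemma exists_edge {S : Set E2} (hS : S.Finite) {v : E2}
    (hv : v ∈ Set.extremePoints ℝ (convexHull ℝ S)) (hne : (S \ {v}).Nonempty) :
    ∃ d n, v + d ∈ convexHull ℝ S ∧ Supp (convexHull ℝ S) v d n := by
  have hvS : v ∈ S := extremePoints_convexHull_subset hv
  have hfin : (S \ {v}).Finite := hS.subset Set.sdiff_subset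
  have hnot : v ∉ convexHull ℝ (S \ {v}) := by
    intro h
    have h1 := (convex_convexHull ℝ S).mem_extremePoints_iff_mem_sdiff_convexHull_sdiff.1 hv
    exact h1.2 (convexHull_mono (Set.sdiff_subset_sdiff_left (subset_convexHull ℝ S)) h)
  obtain ⟨f, u, hfv, hfu⟩ := geometric_hahn_banach_point_closed (convex_convexHull ℝ (S \ {v}))
    (hfin.isCompact_convexHull (𝕜 := ℝ)).isClosed hnot
  obtain ⟨n, hn⟩ : ∃ n : E2, ∀ x, f x = n 0 * x 0 + n 1 * x 1 := by
    refine ⟨(InnerProductSpace.toDual ℝ E2).symm f, fun x => ?_⟩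
    have : f x = inner ℝ ((InnerProductSpace.toDual ℝ E2).symm f) x := by simp
    rw [this, PiLp.inner_apply]
    simp [Fin.sum_univ_two, mul_comm]
  have hpos : ∀ x ∈ S \ {v}, 0 < n 0 * (x 0 - v 0) + n 1 * (x 1 - v 1) := by
    intro x hx
    have := hfu x (subset_convexHull ℝ _ hx)
    rw [hn] at this hfv
    linarith
  obtain ⟨w, hw, hmin⟩ := hfin.exists_minimalFor
    (fun x : E2 => (n 0 * (x 1 - v 1) - n 1 * (x 0 - v 0)) /
      (n 0 * (x 0 - v 0) + n 1 * (x 1 - v 1))) _ hne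
  have hwp := hpos w hw
  refine ⟨w - v, n, ?_, ?_, ?_⟩
  · rw [add_sub_cancel]; exact subset_convexHull ℝ _ hw.1
  · simpa using hwp
  have key : ∀ x ∈ S, 0 ≤ (w 0 - v 0) * (x 1 - v 1) - (w 1 - v 1) * (x 0 - v 0) ∧
      0 ≤ n 0 * (x 0 - v 0) + n 1 * (x 1 - v 1) := by
    intro x hx
    by_cases hxv : x = v
    · subst hxv; simp
    have hx' : x ∈ S \ {v} := ⟨hx, hxv⟩
    have hxp := hpos x hx'
    refine ⟨?_, hxp.le⟩
    have hle := (le_total _ _).elim id (fun h => hmin hx' h)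
    simp only at hle
    rw [div_le_div_iff₀ hwp hxp] at hle
    have hnn : 0 < n 0 ^ 2 + n 1 ^ 2 := by
      by_contra hcon
      have h0 : n 0 = 0 := by nlinarith [sq_nonneg (n 0), sq_nonneg (n 1)]
      have h1 : n 1 = 0 := by nlinarith [sq_nonneg (n 0), sq_nonneg (n 1)]
      rw [h0, h1] at hxp; simp at hxp
    have : 0 ≤ (n 0 ^ 2 + n 1 ^ 2) *
        ((w 0 - v 0) * (x 1 - v 1) - (w 1 - v 1) * (x 0 - v 0)) := by
      nlinarith
    exact nonneg_of_mul_nonneg_right this hnn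
  have hconv : Convex ℝ {x : E2 | 0 ≤ (w 0 - v 0) * (x 1 - v 1) - (w 1 - v 1) * (x 0 - v 0) ∧
      0 ≤ n 0 * (x 0 - v 0) + n 1 * (x 1 - v 1)} := by
    intro x hx y hy a b ha hb hab
    obtain rfl : b = 1 - a := by linarith
    simp only [Set.mem_ofPred_eq, PiLp.add_apply, PiLp.smul_apply, smul_eq_mul] at hx hy ⊢
    have e1 := mul_nonneg ha hx.1
    have e2 := mul_nonneg ha hx.2
    have e3 := mul_nonneg hb hy.1
    have e4 := mul_nonneg hb hy.2
    constructor <;> linarith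
  intro x hx
  have : 0 ≤ (w 0 - v 0) * (x 1 - v 1) - (w 1 - v 1) * (x 0 - v 0) ∧
      0 ≤ n 0 * (x 0 - v 0) + n 1 * (x 1 - v 1) :=
    convexHull_min (fun x hx => key x hx) hconv hx
  simpa using this

lemma cover_aux {P Q : Set E2} (hP : Convex ℝ P) {v d n p q p' q' : E2}
    (hv : v ∈ Set.extremePoints ℝ (P + Q)) (hs : Supp (P + Q) v d n)
    (hp : p ∈ P) (hq : q ∈ Q) (hvpq : p + q = v) (hp' : p' ∈ P) (hq' : q' ∈ Q)
    (h : p' + q' = v + d) (hpos : 0 < n 0 * (p' 0 - p 0) + n 1 * (p' 1 - p 1)) :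
    Good P Q v p := by
  subst hvpq
  refine ⟨ext_left hp hq hv, p' - p, n, q, rfl, hq, by rwa [add_sub_cancel], ?_, ?_⟩
  · simpa using hpos
  obtain ⟨hn, hx⟩ := hs
  have A := (hx _ (Set.add_mem_add hp' hq)).1
  have B := (hx _ (Set.add_mem_add hp hq')).1
  have h0 : p' 0 + q' 0 = p 0 + q 0 + d 0 := by
    have := congrArg (fun z : E2 => z 0) h; simpa using this
  have h1 : p' 1 + q' 1 = p 1 + q 1 + d 1 := by
    have := congrArg (fun z : E2 => z 1) h; simpa using this
  intro x hxm
  refine ⟨?_, (hx x hxm).2⟩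
  have C := (hx x hxm).1
  simp only [PiLp.add_apply, PiLp.sub_apply] at A B C ⊢
  have hz : d 0 * (p' 1 - p 1) - d 1 * (p' 0 - p 0) = 0 := by
    have e0 : q' 0 = p 0 + q 0 + d 0 - p' 0 := by linarith
    have e1 : q' 1 = p 1 + q 1 + d 1 - p' 1 := by linarith
    rw [e0, e1] at B
    apply le_antisymm <;> linarith
  generalize x 1 - (p 1 + q 1) = X at *
  generalize x 0 - (p 0 + q 0) = Y at *
  generalize p' 1 - p 1 = b at *
  generalize p' 0 - p 0 = a at *
  have : (n 0 * d 0 + n 1 * d 1) * (a * X - b * Y) =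
      (n 0 * a + n 1 * b) * (d 0 * X - d 1 * Y) := by
    linear_combination (-(n 0 * Y) - n 1 * X) * hz
  have h2 : 0 ≤ (n 0 * d 0 + n 1 * d 1) * (a * X - b * Y) := by
    rw [this]; exact mul_nonneg hpos.le C
  exact nonneg_of_mul_nonneg_right h2 hn

lemma finite_ext {S : Set E2} (hS : S.Finite) :
    (Set.extremePoints ℝ (convexHull ℝ S)).Finite :=
  hS.subset extremePoints_convexHull_subset

lemma two {S T : Set E2} (hS : S.Finite) (hT : T.Finite) :
    (Set.extremePoints ℝ (convexHull ℝ S + convexHull ℝ T)).ncard ≤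
      (Set.extremePoints ℝ (convexHull ℝ S)).ncard +
      (Set.extremePoints ℝ (convexHull ℝ T)).ncard := by
  have hST : convexHull ℝ S + convexHull ℝ T = convexHull ℝ (S + T) := (convexHull_add S T).symm
  obtain ⟨gf1, gc1⟩ := ncard_good (P := convexHull ℝ S) (Q := convexHull ℝ T) (finite_ext hS)
  obtain ⟨gf2, gc2⟩ := ncard_good (P := convexHull ℝ T) (Q := convexHull ℝ S) (finite_ext hT)
  by_cases hsub : (S + T).Subsingleton
  · rcases Set.eq_empty_or_nonempty
      (Set.extremePoints ℝ (convexHull ℝ S + convexHull ℝ T)) with h0 | ⟨v, hv⟩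
    · rw [h0]; simp
    have h1 : (Set.extremePoints ℝ (convexHull ℝ S + convexHull ℝ T)).ncard ≤ 1 := by
      rw [hST]
      have hs1 : (Set.extremePoints ℝ (convexHull ℝ (S + T))).Subsingleton :=
        hsub.anti extremePoints_convexHull_subset
      have := hs1.finite.to_subtype
      exact Set.ncard_le_one_iff_subsingleton.2 hs1
    obtain ⟨p, hp, q, hq, rfl⟩ := hv.1
    have := (Set.ncard_pos (finite_ext hS)).2 ⟨p, ext_left hp hq hv⟩
    omega
  refine le_trans (le_trans (Set.ncard_le_ncard ?_ (gf1.union gf2)) (Set.ncard_union_le _ _))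
    (add_le_add gc1 gc2)
  intro v hv
  have hv' := hv
  rw [hST] at hv'
  have hne : ((S + T) \ {v}).Nonempty := by
    rw [Set.nonempty_iff_ne_empty]
    intro h
    rw [Set.sdiff_eq_empty] at h
    exact hsub (Set.subsingleton_singleton.anti h)
  obtain ⟨d, n, hd, hs⟩ := exists_edge (hS.add hT) hv' hne
  rw [← hST] at hd hs
  obtain ⟨p, hp, q, hq, hpq⟩ := hv.1
  obtain ⟨p', hp', q', hq', hpq'⟩ := hd
  simp only at hpq hpq'
  by_cases hpos : 0 < n 0 * (p' 0 - p 0) + n 1 * (p' 1 - p 1)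
  · exact Or.inl ⟨p, cover_aux (convex_convexHull ℝ S) hv hs hp hq hpq hp' hq' hpq' hpos⟩
  · right
    rw [add_comm (convexHull ℝ S)] at hv hs
    refine ⟨q, cover_aux (convex_convexHull ℝ T) hv hs hq hp (by rw [add_comm, hpq]) hq' hp'
      (by rw [add_comm, hpq']) ?_⟩
    rw [← hpq] at hpq'
    have h0 : p' 0 + q' 0 = p 0 + q 0 + d 0 := by
      have := congrArg (fun z : E2 => z 0) hpq'; simpa using this
    have h1 : p' 1 + q' 1 = p 1 + q 1 + d 1 := by
      have := congrArg (fun z : E2 => z 1) hpq'; simpa using this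
    have e0 : q' 0 - q 0 = d 0 - (p' 0 - p 0) := by linarith
    have e1 : q' 1 - q 1 = d 1 - (p' 1 - p 1) := by linarith
    rw [e0, e1]
    have := hs.1
    linarith

end MinkPoly

theorem ncard_extremePoints_finset_minkowski_sum_polygons {ι : Type*} (I : Finset ι)
    (hI : I.Nonempty) (s : ι → Set (EuclideanSpace ℝ (Fin 2)))
    (hs : ∀ i ∈ I, (s i).Finite) (P : ι → Set (EuclideanSpace ℝ (Fin 2)))
    (hP : ∀ i ∈ I, P i = convexHull ℝ (s i)) :
    Set.ncard (Set.extremePoints ℝ (∑ i ∈ I, P i)) ≤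
      ∑ i ∈ I, Set.ncard (Set.extremePoints ℝ (P i)) := by
  suffices h : ∃ S : Set (EuclideanSpace ℝ (Fin 2)), S.Finite ∧ ∑ i ∈ I, P i = convexHull ℝ S ∧
      Set.ncard (Set.extremePoints ℝ (∑ i ∈ I, P i)) ≤
      ∑ i ∈ I, Set.ncard (Set.extremePoints ℝ (P i)) from h.choose_spec.2.2
  induction hI using Finset.Nonempty.cons_induction with
  | singleton a =>
    exact ⟨s a, hs a (by simp), by simpa using hP a (by simp), by simp⟩
  | cons a J ha hJ ih =>
    obtain ⟨S, hS, hE, hle⟩ := ih (fun i hi => hs i (by simp [hi])) (fun i hi => hP i (by simp [hi]))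
    have hsa := hs a (by simp)
    have hPa := hP a (by simp)
    refine ⟨s a + S, hsa.add hS, ?_, ?_⟩
    · rw [Finset.sum_cons, hE, hPa, convexHull_add]
    · rw [Finset.sum_cons, Finset.sum_cons]
      have := MinkPoly.two hsa hS
      rw [← hE, ← hPa] at this
      omega
end

section
/- Let E be a real normed vector space and let P, Q ⊆ E be sets. Suppose the collection 𝓕_P = {F | F nonempty and F is an exposed face of P} is finite with n elements and the collection 𝓕_Q = {G | G nonempty and G is an exposed face of Q} is finite with m elements. Then the collection {C | C nonempty and C is an exposed face of P + Q} is finite and has at most n · m elements. -/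
open Pointwise

theorem card_exposedFaces_minkowski_sum_le {E : Type*} [NormedAddCommGroup E]
    [NormedSpace ℝ E] (P Q : Set E) (n m : ℕ)
    (hP : {F : Set E | F.Nonempty ∧ IsExposed ℝ P F}.Finite)
    (hPn : Set.ncard {F : Set E | F.Nonempty ∧ IsExposed ℝ P F} = n)
    (hQ : {G : Set E | G.Nonempty ∧ IsExposed ℝ Q G}.Finite)
    (hQm : Set.ncard {G : Set E | G.Nonempty ∧ IsExposed ℝ Q G} = m) :
    {C : Set E | C.Nonempty ∧ IsExposed ℝ (P + Q) C}.Finite ∧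
      Set.ncard {C : Set E | C.Nonempty ∧ IsExposed ℝ (P + Q) C} ≤ n * m := by
  have hsub : {C : Set E | C.Nonempty ∧ IsExposed ℝ (P + Q) C} ⊆
      Set.image (fun p : Set E × Set E => p.1 + p.2)
        ({F : Set E | F.Nonempty ∧ IsExposed ℝ P F} ×ˢ
          {G : Set E | G.Nonempty ∧ IsExposed ℝ Q G}) := by
    rintro C ⟨hC, hexp⟩
    obtain ⟨l, hl⟩ := hexp hC
    -- a maximizer of l on P + Q splits into maximizers on P and on Q
    have key : ∀ a ∈ P, ∀ b ∈ Q, (∀ y ∈ P + Q, l y ≤ l (a + b)) →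
        (∀ y ∈ P, l y ≤ l a) ∧ (∀ y ∈ Q, l y ≤ l b) := by
      intro a ha b hb h
      constructor
      · intro y hy
        have := h _ (Set.add_mem_add hy hb)
        simp only [map_add] at this
        linarith
      · intro y hy
        have := h _ (Set.add_mem_add ha hy)
        simp only [map_add] at this
        linarith
    have hCeq : {x ∈ P | ∀ y ∈ P, l y ≤ l x} + {x ∈ Q | ∀ y ∈ Q, l y ≤ l x} = C := by
      rw [hl]
      ext x
      constructor
      · rintro ⟨a, ⟨ha, hamax⟩, b, ⟨hb, hbmax⟩, rfl⟩
        refine ⟨Set.add_mem_add ha hb, ?_⟩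
        rintro _ ⟨c, hc, d, hd, rfl⟩
        have h1 := hamax c hc
        have h2 := hbmax d hd
        simp only [map_add]
        linarith
      · rintro ⟨⟨a, ha, b, hb, rfl⟩, h⟩
        obtain ⟨h1, h2⟩ := key a ha b hb h
        exact Set.add_mem_add ⟨ha, h1⟩ ⟨hb, h2⟩
    have hne := hC
    rw [← hCeq, Set.add_nonempty] at hne
    exact ⟨(_, _), ⟨⟨hne.1, fun _ => ⟨l, rfl⟩⟩, ⟨hne.2, fun _ => ⟨l, rfl⟩⟩⟩, hCeq⟩
  have hfin := hP.prod hQ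
  refine ⟨(hfin.image _).subset hsub, ?_⟩
  calc _ ≤ _ := Set.ncard_le_ncard hsub (hfin.image _)
    _ ≤ _ := Set.ncard_image_le hfin
    _ = n * m := by rw [Set.ncard_prod, hPn, hQm]
end
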